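/- Let g ∈ GL(V), V finite-dimensional, with Jordan decomposition g = e h u. Then the recurrent set of the induced flow on ℙ(V) is R(g) = fix(h) ∩ fix(u), the intersection of the projective fixed-point sets of the hyperbolic and the unipotent Jordan components. -/

import Mathlib

open Filter Topology LinearAlgebra.Projectivization

instance projectivizationTopology {K V : Type*} [DivisionRing K] [AddCommGroup V]
    [Module K V] [TopologicalSpace V] : TopologicalSpace (ℙ K V) :=
  instTopologicalSpaceQuotient

/-- The flow induced on projective space by iterating a linear automorphism. -/
def projFlow {K V : Type*} [Field K] [AddCommGroup V] [Module K V]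
    (g : V ≃ₗ[K] V) (t : ℤ) : ℙ K V → ℙ K V :=
  Projectivization.map ((g ^ t : V ≃ₗ[K] V) : V →ₗ[K] V) (g ^ t).injective

open scoped TensorProduct

lemma zpow_eig {K W : Type*} [Field K] [AddCommGroup W] [Module K W] (f : W ≃ₗ[K] W)
    (w : W) (a : K) (ha : a ≠ 0) (hw : f w = a • w) (t : ℤ) : (f ^ t) w = a ^ t • w := by
  have hinv : f⁻¹ w = a⁻¹ • w := by
    apply f.injective
    have h1 : f (f⁻¹ w) = w := by
      rw [← LinearEquiv.mul_apply]; simp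
    rw [h1, map_smul, hw, smul_smul, inv_mul_cancel₀ ha, one_smul]
  induction t with
  | zero => simp
  | succ n ih =>
    rw [zpow_add_one, LinearEquiv.mul_apply, hw, map_smul, ih, smul_smul, zpow_add_one₀ ha, mul_comm]
  | pred n ih =>
    rw [zpow_sub_one, LinearEquiv.mul_apply, hinv, map_smul, ih, smul_smul, zpow_sub_one₀ ha, mul_comm]

/-- complexified functional -/
noncomputable def phiC {V : Type*} [AddCommGroup V] [Module ℝ V] (φ : V →ₗ[ℝ] ℝ) :
    ℂ ⊗[ℝ] V →ₗ[ℂ] ℂ :=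
  (TensorProduct.AlgebraTensorModule.rid ℝ ℂ ℂ).toLinearMap ∘ₗ φ.baseChange ℂ

lemma phiC_tmul {V : Type*} [AddCommGroup V] [Module ℝ V] (φ : V →ₗ[ℝ] ℝ) (x : V) :
    phiC φ (1 ⊗ₜ x) = (φ x : ℂ) := by
  simp [phiC]

lemma end_eq_zero_of_baseChange {V : Type*} [AddCommGroup V] [Module ℝ V]
    (A : V →ₗ[ℝ] V) (hA : A.baseChange ℂ = 0) : A = 0 := by
  ext v
  rw [LinearMap.zero_apply, ← Module.forall_dual_apply_eq_zero_iff ℝ]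
  intro φ
  have h1 : A.baseChange ℂ (1 ⊗ₜ v) = 0 := by rw [hA]; rfl
  rw [LinearMap.baseChange_tmul] at h1
  have := phiC_tmul φ (A v)
  rw [h1, map_zero] at this
  exact_mod_cast this.symm

lemma bounded_e {V : Type*} [NormedAddCommGroup V] [NormedSpace ℝ V] [FiniteDimensional ℝ V]
    (e : V ≃ₗ[ℝ] V)
    (he : Module.End.IsSemisimple (LinearMap.baseChange ℂ (e : V →ₗ[ℝ] V)) ∧
      ∀ μ ∈ spectrum ℂ (LinearMap.baseChange ℂ (e : V →ₗ[ℝ] V)), ‖μ‖ = 1) :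
    ∃ C : ℝ, 0 < C ∧ ∀ (t : ℤ) (x : V), ‖(e ^ t) x‖ ≤ C * ‖x‖ := by
  have key : ∀ (φ : V →ₗ[ℝ] ℝ) (w : ℂ ⊗[ℝ] V), ∃ C : ℝ, ∀ t : ℤ,
      ‖phiC φ ((LinearEquiv.baseChange ℝ ℂ V V e ^ t) w)‖ ≤ C := by
    intro φ w
    have hw : w ∈ ⨆ μ, Module.End.eigenspace (LinearMap.baseChange ℂ (e : V →ₗ[ℝ] V)) μ := by
      rw [he.1.iSup_eigenspace_eq_top]; trivial
    induction hw using Submodule.iSup_induction' with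
    | zero => exact ⟨0, fun t => by simp⟩
    | add x y hx hy ihx ihy =>
      obtain ⟨C, hC⟩ := ihx
      obtain ⟨D, hD⟩ := ihy
      refine ⟨C + D, fun t => ?_⟩
      rw [map_add, map_add]
      exact (norm_add_le _ _).trans (add_le_add (hC t) (hD t))
    | mem μ x hx =>
      by_cases h0 : x = 0
      · exact ⟨0, fun t => by simp [h0]⟩
      have hev : Module.End.HasEigenvalue (LinearMap.baseChange ℂ (e : V →ₗ[ℝ] V)) μ :=
        Module.End.hasEigenvalue_of_hasEigenvector ⟨hx, h0⟩
      have hμ := he.2 μ hev.mem_spectrum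
      have hμ0 : μ ≠ 0 := by rintro rfl; simp at hμ
      refine ⟨‖phiC φ x‖, fun t => ?_⟩
      have hx1 : LinearMap.baseChange ℂ (e : V →ₗ[ℝ] V) x = μ • x := Module.End.mem_eigenspace_iff.1 hx
      have hx2 : (LinearEquiv.baseChange ℝ ℂ V V e) x = μ • x := by
        rw [← hx1, ← LinearEquiv.coe_baseChange, LinearEquiv.coe_toLinearMap]
      rw [zpow_eig (LinearEquiv.baseChange ℝ ℂ V V e) x μ hμ0 hx2 t, map_smul, norm_smul, norm_zpow, hμ]
      simp
  have key2 : ∀ x : V, ∃ C : ℝ, ∀ t : ℤ, ‖(e ^ t) x‖ ≤ C := by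
    intro x
    let b := Module.finBasis ℝ V
    choose C hC using fun j => key (b.coord j) (1 ⊗ₜ x)
    refine ⟨∑ j, C j * ‖b j‖, fun t => ?_⟩
    rw [← b.sum_repr ((e ^ t) x)]
    refine (norm_sum_le _ _).trans (Finset.sum_le_sum fun j _ => ?_)
    rw [norm_smul]
    refine mul_le_mul_of_nonneg_right ?_ (norm_nonneg _)
    have := hC j t
    rw [← LinearEquiv.baseChange_zpow, LinearEquiv.baseChange_tmul, phiC_tmul] at this
    simpa using this
  have : CompleteSpace V := FiniteDimensional.complete ℝ V
  obtain ⟨C, hC⟩ := banach_steinhaus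
    (g := fun t : ℤ => LinearMap.toContinuousLinearMap ((e ^ t : V ≃ₗ[ℝ] V) : V →ₗ[ℝ] V)) key2
  refine ⟨max C 1, by positivity, fun t x => ?_⟩
  refine ((LinearMap.toContinuousLinearMap ((e ^ t : V ≃ₗ[ℝ] V) : V →ₗ[ℝ] V)).le_opNorm x).trans ?_
  gcongr
  exact (hC t).trans (le_max_left _ _)

lemma h_decomp {V : Type*} [NormedAddCommGroup V] [NormedSpace ℝ V] [FiniteDimensional ℝ V]
    [Nontrivial V] (h : V →ₗ[ℝ] V)
    (hh : Module.End.IsSemisimple (LinearMap.baseChange ℂ h) ∧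
      ∀ μ ∈ spectrum ℂ (LinearMap.baseChange ℂ h), μ.im = 0 ∧ 0 < μ.re) :
    ∃ (S : Finset ℝ) (P : ℝ → Module.End ℝ V), (∀ l ∈ S, 0 < l) ∧
      (∀ l ∈ S, ∀ x, h (P l x) = l • P l x) ∧ (∀ x, ∑ l ∈ S, P l x = x) ∧
      ∀ A : Module.End ℝ V, Commute h A → ∀ l, Commute (P l) A := by
  classical
  let S : Finset ℝ := (Module.End.finite_spectrum (LinearMap.baseChange ℂ h)).toFinset.image Complex.re
  have hnod : Polynomial.aeval h (Lagrange.nodal S id) = 0 := by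
    apply end_eq_zero_of_baseChange
    have h1 : LinearMap.baseChange ℂ (Polynomial.aeval h (Lagrange.nodal S id)) =
        Polynomial.aeval (LinearMap.baseChange ℂ h) (Lagrange.nodal S id) :=
      (Polynomial.aeval_algHom_apply (Module.End.baseChangeHom ℝ ℂ V) h (Lagrange.nodal S id)).symm
    rw [h1]
    apply LinearMap.ext
    intro w
    have hw : w ∈ ⨆ μ, Module.End.eigenspace (LinearMap.baseChange ℂ h) μ := by
      rw [hh.1.iSup_eigenspace_eq_top]; trivial
    rw [LinearMap.zero_apply]
    induction hw using Submodule.iSup_induction' with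
    | zero => simp
    | add x y hx hy ihx ihy => rw [map_add, ihx, ihy, add_zero]
    | mem μ x hx =>
      by_cases h0 : x = 0
      · simp [h0]
      have hev : Module.End.HasEigenvalue (LinearMap.baseChange ℂ h) μ :=
        Module.End.hasEigenvalue_of_hasEigenvector ⟨hx, h0⟩
      have hμ := hh.2 μ hev.mem_spectrum
      have hS : μ.re ∈ S := Finset.mem_image.2 ⟨μ, by simpa using hev.mem_spectrum, rfl⟩
      have hre : μ = (μ.re : ℂ) := by apply Complex.ext <;> simp [hμ.1]
      rw [Lagrange.nodal_eq_mul_nodal_erase hS, mul_comm, map_mul, Module.End.mul_apply]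
      have : (Polynomial.aeval (LinearMap.baseChange ℂ h)) (Polynomial.X - Polynomial.C (id μ.re)) x = 0 := by
        rw [map_sub, Polynomial.aeval_X, Polynomial.aeval_C, LinearMap.sub_apply,
          Module.End.mem_eigenspace_iff.1 hx, Module.algebraMap_end_apply, sub_eq_zero]
        conv_lhs => rw [hre]
        exact Complex.coe_smul _ _
      rw [this, map_zero]
  have hne : S.Nonempty := by
    rw [Finset.nonempty_iff_ne_empty]
    intro hS
    rw [hS] at hnod
    simp at hnod
  refine ⟨S, fun l => Polynomial.aeval h (Lagrange.basis S id l), ?_, ?_, ?_, ?_⟩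
  · intro l hl
    obtain ⟨μ, hμ, rfl⟩ := Finset.mem_image.1 hl
    exact (hh.2 μ (by simpa using hμ)).2
  · intro l hl x
    have h1 : (Polynomial.X - Polynomial.C l) * Lagrange.basis S id l =
        Polynomial.C (Lagrange.nodalWeight S id l) * Lagrange.nodal S id := by
      rw [Lagrange.basis_eq_prod_sub_inv_mul_nodal_div hl, ← Lagrange.nodal_erase_eq_nodal_div hl,
        Lagrange.nodal_eq_mul_nodal_erase hl]
      simp only [id]
      ring
    have h2 := congrArg (fun p => Polynomial.aeval h p x) h1
    simp only [map_mul, hnod, mul_zero, map_sub, Polynomial.aeval_X, Polynomial.aeval_C,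
      Module.End.mul_apply, LinearMap.sub_apply, Module.algebraMap_end_apply, LinearMap.zero_apply] at h2
    exact sub_eq_zero.1 h2
  · intro x
    rw [← LinearMap.sum_apply, ← map_sum, Lagrange.sum_basis (Function.injective_id.injOn) hne]
    simp
  · intro A hA l
    exact (Algebra.commute_of_mem_adjoin_singleton_of_commute (Polynomial.aeval_mem_adjoin_singleton ℝ h) hA.symm).symm

lemma recurrent_iff {V : Type*} [NormedAddCommGroup V] [NormedSpace ℝ V]
    (g : V ≃ₗ[ℝ] V) (v : V) (hv : v ≠ 0) :
    Projectivization.mk ℝ v hv ∈ omegaLimit atTop (projFlow g) {Projectivization.mk ℝ v hv} ↔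
      ∀ ε > 0, ∀ T : ℕ, ∃ t ≥ T, ∃ s : ℝ, s ≠ 0 ∧ ‖s • (g ^ t) v - v‖ < ε := by
  have hmk : ∀ (t : ℕ), projFlow g (t : ℤ) (Projectivization.mk ℝ v hv) =
      Projectivization.mk ℝ ((g ^ t) v) ((g ^ t).map_ne_zero_iff.2 hv) := by
    intro t
    simp only [projFlow, Projectivization.map_mk, zpow_natCast]
    rfl
  rw [mem_omegaLimit_singleton_iff_mapClusterPt, mapClusterPt_iff_frequently]
  constructor
  · intro H ε hε T
    let U : Set (ℙ ℝ V) := {q | ∃ w : {w : V // w ≠ 0}, ‖(w : V) - v‖ < ε ∧ Projectivization.mk' ℝ w = q}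
    have hU : IsOpen U := by
      have : IsOpen ((Projectivization.mk' ℝ : {w : V // w ≠ 0} → ℙ ℝ V) ⁻¹' U) := by
        have heq : ((Projectivization.mk' ℝ : {w : V // w ≠ 0} → ℙ ℝ V) ⁻¹' U) =
            ⋃ s : ℝˣ, {w : {w : V // w ≠ 0} | ‖(s : ℝ) • (w : V) - v‖ < ε} := by
          ext ⟨w, hw⟩
          simp only [Set.mem_preimage, U, Set.mem_ofPred_eq, Set.mem_iUnion, Projectivization.mk'_eq_mk,
            Projectivization.mk_eq_mk_iff]
          constructor
          · rintro ⟨⟨w', hw'⟩, h1, s, h2⟩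
            refine ⟨s, ?_⟩
            simp only [Units.smul_def] at h2
            rw [h2]; exact h1
          · rintro ⟨s, hs⟩
            exact ⟨⟨(s : ℝ) • w, smul_ne_zero s.ne_zero hw⟩, hs, s, rfl⟩
        rw [heq]
        refine isOpen_iUnion fun s => ?_
        exact isOpen_lt (by fun_prop) continuous_const
      exact this
    have hvU : Projectivization.mk ℝ v hv ∈ U := ⟨⟨v, hv⟩, by simpa using hε, rfl⟩
    have h1 := (H U (hU.mem_nhds hvU)).forall_exists_of_atTop (T : ℤ)
    obtain ⟨b, hb, hbU⟩ := h1
    lift b to ℕ using (by omega)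
    rw [hmk] at hbU
    obtain ⟨⟨w, hw⟩, h2, h3⟩ := hbU
    rw [Projectivization.mk'_eq_mk, Projectivization.mk_eq_mk_iff] at h3
    obtain ⟨s, hs⟩ := h3
    refine ⟨b, by exact_mod_cast hb, s, s.ne_zero, ?_⟩
    simp only [Units.smul_def] at hs
    rw [hs]; exact h2
  · intro H U hU
    obtain ⟨O, hOU, hO, hvO⟩ := mem_nhds_iff.1 hU
    have hpre : IsOpen ((Projectivization.mk' ℝ : {w : V // w ≠ 0} → ℙ ℝ V) ⁻¹' O) := hO
    obtain ⟨ε, hε, hball⟩ := Metric.isOpen_iff.1 hpre ⟨v, hv⟩ hvO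
    rw [frequently_atTop]
    intro a
    obtain ⟨t, ht, s, hs, hst⟩ := H ε hε a.toNat
    refine ⟨t, by omega, hOU ?_⟩
    rw [hmk]
    have h0 : s • (g ^ t) v ≠ 0 := smul_ne_zero hs ((g ^ t).map_ne_zero_iff.2 hv)
    have h1 : (⟨s • (g ^ t) v, h0⟩ : {w : V // w ≠ 0}) ∈ Metric.ball (⟨v, hv⟩ : {w : V // w ≠ 0}) ε := by
      rw [Metric.mem_ball, Subtype.dist_eq, dist_eq_norm]; exact hst
    have h2 := hball h1
    rw [Set.mem_preimage, Projectivization.mk'_eq_mk] at h2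
    convert h2 using 1
    rw [Projectivization.mk_eq_mk_iff]
    exact ⟨(Units.mk0 s hs)⁻¹, by simp [Units.smul_def, smul_smul, hs]⟩

lemma gpow {V : Type*} [AddCommGroup V] [Module ℝ V] (g e h u : V ≃ₗ[ℝ] V)
    (hg : ∀ z, g z = e (h (u z))) (heh : ∀ z, e (h z) = h (e z)) (heu : ∀ z, e (u z) = u (e z))
    (l : ℝ) (t : ℕ) : ∀ x y : V, h x = l • x → h y = l • y → u x = x → u y = y + x →
      (g ^ t) y = l ^ t • ((e ^ t) y + (t : ℝ) • (e ^ t) x) := by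
  induction t with
  | zero => intro x y _ _ _ _; simp
  | succ t ih =>
    intro x y hx hy ux uy
    have h1 : g y = l • (e y + e x) := by
      rw [hg, uy, map_add, hx, hy, map_add, map_smul, map_smul, smul_add]
    have hx' : h (e x) = l • e x := by rw [← heh, hx, map_smul]
    have hy' : h (e y) = l • e y := by rw [← heh, hy, map_smul]
    have ux' : u (e x) = e x := by rw [← heu, ux]
    have uy' : u (e y) = e y + e x := by rw [← heu, uy, map_add]
    have a1 := ih (e x) (e y) hx' hy' ux' uy'
    have a2 := ih 0 (e x) (by simp) hx' (by simp) (by simp [ux'])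
    rw [pow_succ g, LinearEquiv.mul_apply, h1, map_smul, map_add, a1, a2, pow_succ e,
      LinearEquiv.mul_apply, LinearEquiv.mul_apply]
    push_cast
    simp only [map_zero, smul_zero, add_zero]
    module

lemma map_pow_comm {V : Type*} [AddCommGroup V] [Module ℝ V] (g : V ≃ₗ[ℝ] V) (A : Module.End ℝ V)
    (hA : ∀ z, A (g z) = g (A z)) (t : ℕ) (x : V) : A ((g ^ t) x) = (g ^ t) (A x) := by
  induction t generalizing x with
  | zero => simp
  | succ t ih => rw [pow_succ, LinearEquiv.mul_apply, LinearEquiv.mul_apply, ih, hA]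

lemma comp_lemma {V : Type*} [NormedAddCommGroup V] [NormedSpace ℝ V] [FiniteDimensional ℝ V]
    (g e h u : V ≃ₗ[ℝ] V)
    (hg : ∀ z, g z = e (h (u z))) (heh : ∀ z, e (h z) = h (e z)) (heu : ∀ z, e (u z) = u (e z))
    (hhu : ∀ z, h (u z) = u (h z))
    (hu : IsNilpotent ((u : V →ₗ[ℝ] V) - 1))
    (C : ℝ) (hC0 : 0 < C) (hC : ∀ (t : ℤ) (x : V), ‖(e ^ t) x‖ ≤ C * ‖x‖)
    (w : V) (hw : w ≠ 0) (l : ℝ) (hl : 0 < l) (hwl : h w = l • w)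
    (t : ℕ → ℕ) (ht : Tendsto t atTop atTop) (s : ℕ → ℝ)
    (hlim : Tendsto (fun n => s n • (g ^ t n) w) atTop (𝓝 w)) :
    u w = w ∧ ∃ c D : ℝ, 0 < c ∧ ∀ᶠ n in atTop, c ≤ |s n| * l ^ t n ∧ |s n| * l ^ t n ≤ D := by
  classical
  set N : Module.End ℝ V := (u : V →ₗ[ℝ] V) - 1 with hN
  have Nap : ∀ z, N z = u z - z := fun z => by simp [hN]
  have hCn : ∀ (k : ℕ) (x : V), ‖(e ^ k) x‖ ≤ C * ‖x‖ := fun k x => by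
    simpa using hC k x
  have hCl : ∀ (k : ℕ) (x : V), ‖x‖ ≤ C * ‖(e ^ k) x‖ := fun k x => by
    have := hC (-k) ((e ^ k) x)
    rwa [← LinearEquiv.mul_apply, ← zpow_natCast, ← zpow_add, neg_add_cancel, zpow_zero,
      zpow_natCast] at this
  have hNg : ∀ z, N (g z) = g (N z) := fun z => by
    simp only [Nap, hg, map_sub]
    rw [hhu (u z), ← heu, hhu]
  have hNh : ∀ z, N (h z) = h (N z) := fun z => by
    simp only [Nap, map_sub, hhu]
  have hNpg : ∀ m z, (N ^ m) (g z) = g ((N ^ m) z) := by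
    intro m
    induction m with
    | zero => simp
    | succ m ih => intro z; rw [pow_succ, Module.End.mul_apply, Module.End.mul_apply, hNg, ih]
  have hNph : ∀ m z, (N ^ m) (h z) = h ((N ^ m) z) := by
    intro m
    induction m with
    | zero => simp
    | succ m ih => intro z; rw [pow_succ, Module.End.mul_apply, Module.End.mul_apply, hNh, ih]
  have hNl : ∀ m, h ((N ^ m) w) = l • (N ^ m) w := fun m => by rw [← hNph, hwl, map_smul]
  have hNlim : ∀ m, Tendsto (fun n => s n • (g ^ t n) ((N ^ m) w)) atTop (𝓝 ((N ^ m) w)) := by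
    intro m
    have hc : Continuous (N ^ m) := LinearMap.continuous_of_finiteDimensional _
    have := (hc.tendsto w).comp hlim
    refine this.congr fun n => ?_
    simp only [Function.comp, map_smul]
    rw [map_pow_comm g (N ^ m) (hNpg m)]
  have hex : ∃ m, (N ^ m) w = 0 := by
    obtain ⟨k, hk⟩ := hu
    exact ⟨k, by rw [hk]; rfl⟩
  obtain ⟨m, hm⟩ : ∃ m, Nat.find hex = m + 1 := by
    refine Nat.exists_eq_succ_of_ne_zero fun h0 => hw ?_
    have := Nat.find_spec hex
    rw [h0] at this
    simpa using this
  have hx0 : (N ^ m) w ≠ 0 := Nat.find_min hex (by omega)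
  have hx1 : (N ^ (m + 1)) w = 0 := hm ▸ Nat.find_spec hex
  set x := (N ^ m) w with hx
  have ux : u x = x := by
    have : N x = 0 := by rw [hx, ← Module.End.mul_apply, ← pow_succ', hx1]
    rw [Nap] at this
    exact sub_eq_zero.1 this
  have gx : ∀ n, (g ^ n) x = l ^ n • (e ^ n) x := fun n => by
    have := gpow g e h u hg heh heu l n 0 x (by simp) (hNl m) (by simp) (by simp [ux])
    simpa using this
  have hxpos : 0 < ‖x‖ := norm_pos_iff.2 hx0
  have hnx : ∀ n, ‖s n • (g ^ t n) x‖ = |s n| * l ^ t n * ‖(e ^ t n) x‖ := fun n => by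
    rw [gx, norm_smul, norm_smul, norm_pow, Real.norm_eq_abs, Real.norm_eq_abs, abs_of_pos hl, mul_assoc]
  have hbd : ∀ᶠ n in atTop, 1 / (2 * C) ≤ |s n| * l ^ t n ∧ |s n| * l ^ t n ≤ 2 * C := by
    have h1 := (hNlim m).norm
    filter_upwards [h1.eventually (lt_mem_nhds (half_lt_self hxpos)),
      h1.eventually (gt_mem_nhds (show ‖x‖ < 2 * ‖x‖ by linarith))] with n a1 a2
    have ha : 0 ≤ |s n| * l ^ t n := by positivity
    rw [hnx] at a1 a2
    have b1 := mul_le_mul_of_nonneg_left (hCn (t n) x) ha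
    have b2 := mul_le_mul_of_nonneg_left (hCl (t n) x) ha
    constructor
    · rw [div_le_iff₀ (by positivity)]
      by_contra hcon
      push Not at hcon
      nlinarith [mul_lt_mul_of_pos_right hcon hxpos]
    · by_contra hcon
      push Not at hcon
      nlinarith [mul_lt_mul_of_pos_right hcon hxpos]
  refine ⟨?_, 1 / (2 * C), 2 * C, by positivity, hbd⟩
  cases m with
  | zero => simpa [hx] using ux
  | succ m =>
    exfalso
    set y := (N ^ m) w with hy
    have uy : u y = y + x := by
      have : N y = x := by rw [hx, hy, ← Module.End.mul_apply, ← pow_succ']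
      rw [Nap] at this
      rw [← this]; abel
    have gy : ∀ n : ℕ, (g ^ n) y = l ^ n • (e ^ n) (y + (n : ℝ) • x) := fun n => by
      rw [map_add, map_smul]
      exact gpow g e h u hg heh heu l n x y (hNl _) (hNl m) ux uy
    have h1 := (hNlim m).norm
    have ht' : Tendsto (fun n => (t n : ℝ)) atTop atTop := tendsto_natCast_atTop_atTop.comp ht
    obtain ⟨n, ⟨a1, a2⟩, a3, a4⟩ := (hbd.and ((h1.eventually (gt_mem_nhds (lt_add_one ‖y‖))).and
      (ht'.eventually (eventually_gt_atTop ((2 * C * (C * (‖y‖ + 1)) + ‖y‖) / ‖x‖))))).exists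
    rw [← hy, gy, norm_smul, norm_smul, norm_pow, Real.norm_eq_abs, Real.norm_eq_abs, abs_of_pos hl,
      ← mul_assoc] at a3
    have b1 := hCl (t n) (y + (t n : ℝ) • x)
    have b2 : (t n : ℝ) * ‖x‖ - ‖y‖ ≤ ‖y + (t n : ℝ) • x‖ := by
      have := norm_sub_le (y + (t n : ℝ) • x) y
      rw [add_sub_cancel_left, norm_smul, Real.norm_natCast] at this
      linarith
    rw [div_lt_iff₀ hxpos] at a4
    set q := ‖(e ^ t n) (y + (t n : ℝ) • x)‖ with hq
    have hq0 : 0 ≤ q := norm_nonneg _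
    have b3 : 1 / (2 * C) * q < ‖y‖ + 1 := (mul_le_mul_of_nonneg_right a1 hq0).trans_lt a3
    have b4 : q < 2 * C * (‖y‖ + 1) := by
      rw [one_div, inv_mul_lt_iff₀ (by positivity)] at b3
      exact b3
    have b5 : C * q < C * (2 * C * (‖y‖ + 1)) := by gcongr
    nlinarith

lemma proj_fix {V : Type*} [AddCommGroup V] [Module ℝ V] (f : V ≃ₗ[ℝ] V) (v : V) (hv : v ≠ 0) (a : ℝ)
    (h : f v = a • v) (t : ℤ) :
    projFlow f t (Projectivization.mk ℝ v hv) = Projectivization.mk ℝ v hv := by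
  have ha : a ≠ 0 := by
    rintro rfl
    rw [zero_smul] at h
    exact hv (f.map_eq_zero_iff.1 h)
  simp only [projFlow, Projectivization.map_mk]
  rw [Projectivization.mk_eq_mk_iff']
  exact ⟨a ^ t, (zpow_eig f v a ha h t).symm⟩

lemma e_recurrent {V : Type*} [NormedAddCommGroup V] [NormedSpace ℝ V] [FiniteDimensional ℝ V]
    (e : V ≃ₗ[ℝ] V) (C : ℝ) (hC0 : 0 < C) (hC : ∀ (t : ℤ) (x : V), ‖(e ^ t) x‖ ≤ C * ‖x‖)
    (v : V) (ε : ℝ) (hε : 0 < ε) (T : ℕ) : ∃ t ≥ T, ‖(e ^ t) v - v‖ < ε := by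
  have : ProperSpace V := FiniteDimensional.proper ℝ V
  have hb : ∀ n : ℕ, (e ^ n) v ∈ Metric.closedBall (0 : V) (C * ‖v‖) := fun n => by
    simpa using hC n v
  obtain ⟨a, -, φ, hφ, hlim⟩ := (isCompact_closedBall (0 : V) (C * ‖v‖)).tendsto_subseq hb
  obtain ⟨M, hM⟩ := Metric.cauchySeq_iff'.1 hlim.cauchySeq (ε / C) (by positivity)
  have h1 := hM (M + φ M + T) (by omega)
  have h2 : M + φ M + T ≤ φ (M + φ M + T) := hφ.id_le _
  refine ⟨φ (M + φ M + T) - φ M, by omega, ?_⟩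
  rw [dist_eq_norm] at h1
  simp only [Function.comp] at h1
  set k := φ (M + φ M + T) with hk
  have h3 := hC (-(φ M : ℤ)) ((e ^ k) v - (e ^ φ M) v)
  have h4 : (e ^ (-(φ M : ℤ))) ((e ^ k) v - (e ^ φ M) v) = (e ^ (k - φ M)) v - v := by
    rw [map_sub, ← LinearEquiv.mul_apply, ← LinearEquiv.mul_apply, ← zpow_natCast e k,
      ← zpow_natCast e (φ M), ← zpow_add, ← zpow_add, neg_add_cancel, zpow_zero, ← zpow_natCast,
      Nat.cast_sub (by omega), sub_eq_neg_add (k : ℤ)]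
    rfl
  rw [h4] at h3
  refine h3.trans_lt ?_
  rwa [lt_div_iff₀ hC0, mul_comm] at h1

/-- Let `g = e h u` be the multiplicative Jordan decomposition of
`g ∈ GL(V)`, `V` finite dimensional.  Then the recurrent set of the induced flow on
`ℙ(V)`, `R(g) = {[x] : [x] ∈ ω([x])}`, equals the intersection of the projective fixed
point sets of the hyperbolic and unipotent Jordan components. -/
theorem recurrent_set_eq_fix_inter_fix
    {V : Type*} [NormedAddCommGroup V] [NormedSpace ℝ V] [FiniteDimensional ℝ V]
    (g e h u : V ≃ₗ[ℝ] V) (hg : g = e * h * u)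
    (heh : Commute (e : V →ₗ[ℝ] V) (h : V →ₗ[ℝ] V))
    (heu : Commute (e : V →ₗ[ℝ] V) (u : V →ₗ[ℝ] V))
    (hhu : Commute (h : V →ₗ[ℝ] V) (u : V →ₗ[ℝ] V))
    (he : Module.End.IsSemisimple (LinearMap.baseChange ℂ (e : V →ₗ[ℝ] V)) ∧
      ∀ μ ∈ spectrum ℂ (LinearMap.baseChange ℂ (e : V →ₗ[ℝ] V)), ‖μ‖ = 1)
    (hh : Module.End.IsSemisimple (LinearMap.baseChange ℂ (h : V →ₗ[ℝ] V)) ∧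
      ∀ μ ∈ spectrum ℂ (LinearMap.baseChange ℂ (h : V →ₗ[ℝ] V)), μ.im = 0 ∧ 0 < μ.re)
    (hu : IsNilpotent ((u : V →ₗ[ℝ] V) - 1)) :
    {p : ℙ ℝ V | p ∈ omegaLimit atTop (projFlow g) {p}} =
      {p : ℙ ℝ V | ∀ t : ℤ, projFlow h t p = p} ∩
      {p : ℙ ℝ V | ∀ t : ℤ, projFlow u t p = p} := by

  have hg' : ∀ z, g z = e (h (u z)) := fun z => by rw [hg]; rfl
  have heh' : ∀ z, e (h z) = h (e z) := fun z => LinearMap.congr_fun heh z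
  have heu' : ∀ z, e (u z) = u (e z) := fun z => LinearMap.congr_fun heu z
  have hhu' : ∀ z, h (u z) = u (h z) := fun z => LinearMap.congr_fun hhu z
  obtain ⟨C, hC0, hC⟩ := bounded_e e he
  ext p
  induction p using Projectivization.ind with
  | h v hv =>
  have : Nontrivial V := ⟨v, 0, hv⟩
  rw [Set.mem_ofPred_eq, recurrent_iff]
  constructor
  · intro H
    obtain ⟨S, P, hS, hP, hsum, hcomm⟩ := h_decomp (h : V →ₗ[ℝ] V) hh
    choose t ht s hs hst using fun n : ℕ => H (1 / ((n : ℝ) + 1)) (by positivity) n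
    have htt : Tendsto t atTop atTop := tendsto_atTop_mono ht tendsto_id
    have hlim : Tendsto (fun n => s n • (g ^ t n) v) atTop (𝓝 v) := by
      rw [tendsto_iff_norm_sub_tendsto_zero]
      exact squeeze_zero (fun _ => norm_nonneg _) (fun n => (hst n).le)
        tendsto_one_div_add_atTop_nhds_zero_nat
    have hPg : ∀ l z, P l (g z) = g (P l z) := by
      intro l z
      have hc : Commute (h : V →ₗ[ℝ] V) (g : V →ₗ[ℝ] V) := by
        apply LinearMap.ext
        intro z
        change h (g z) = g (h z)
        rw [hg', hg', ← heh', ← hhu']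
      exact LinearMap.congr_fun (hcomm _ hc l) z
    have hPlim : ∀ l, Tendsto (fun n => s n • (g ^ t n) (P l v)) atTop (𝓝 (P l v)) := by
      intro l
      have hc : Continuous (P l) := LinearMap.continuous_of_finiteDimensional _
      have := (hc.tendsto v).comp hlim
      refine this.congr fun n => ?_
      simp only [Function.comp, map_smul]
      rw [map_pow_comm g (P l) (hPg l)]
    have main : ∀ l ∈ S, P l v ≠ 0 → u (P l v) = P l v ∧ ∃ c D : ℝ, 0 < c ∧
        ∀ᶠ n in atTop, c ≤ |s n| * l ^ t n ∧ |s n| * l ^ t n ≤ D := fun l hl hne =>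
      comp_lemma g e h u hg' heh' heu' hhu' hu C hC0 hC (P l v) hne l (hS l hl) (hP l hl v) t htt s
        (hPlim l)
    obtain ⟨l, hl, hne⟩ : ∃ l ∈ S, P l v ≠ 0 := by
      by_contra! hcon
      exact hv (by rw [← hsum v]; exact Finset.sum_eq_zero hcon)
    have nolt : ∀ a ∈ S, ∀ b ∈ S, P a v ≠ 0 → P b v ≠ 0 → ¬ a < b := by
      intro a ha b hb hna hnb hab
      obtain ⟨-, c, D', hc, h1⟩ := main a ha hna
      obtain ⟨-, c', D, hc', h2⟩ := main b hb hnb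
      have ha0 := hS a ha
      have h3 : Tendsto (fun n => (b / a) ^ t n) atTop atTop :=
        (tendsto_pow_atTop_atTop_of_one_lt ((one_lt_div ha0).2 hab)).comp htt
      obtain ⟨n, ⟨a1, -⟩, ⟨-, a2⟩, a3⟩ :=
        (h1.and (h2.and (h3.eventually (eventually_gt_atTop (D / c))))).exists
      have h4 : |s n| * b ^ t n = (|s n| * a ^ t n) * (b / a) ^ t n := by
        rw [div_pow]; field_simp
      rw [div_lt_iff₀ hc] at a3
      have hb0 := hS b hb
      have h5 : c * (b / a) ^ t n ≤ (|s n| * a ^ t n) * (b / a) ^ t n := by gcongr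
      rw [h4] at a2
      linarith
    have hveq : P l v = v := by
      conv_rhs => rw [← hsum v]
      symm
      apply Finset.sum_eq_single_of_mem l hl
      intro b hb hbl
      by_contra hnb
      rcases lt_or_gt_of_ne hbl with hlt | hlt
      · exact nolt b hb l hl hnb hne hlt
      · exact nolt l hl b hb hne hnb hlt
    have hu1 := (main l hl hne).1
    have hh1 := hP l hl v
    rw [hveq] at hu1 hh1
    exact ⟨proj_fix h v hv l hh1, proj_fix u v hv 1 (by rw [hu1, one_smul])⟩
  · rintro ⟨h1, h2⟩ ε hε T
    have h1' := h1 1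
    have h2' := h2 1
    simp only [projFlow, Projectivization.map_mk, zpow_one] at h1' h2'
    rw [Projectivization.mk_eq_mk_iff'] at h1' h2'
    obtain ⟨l, hl⟩ := h1'
    obtain ⟨a, ha⟩ := h2'
    replace hl : h v = l • v := hl.symm
    replace ha : u v = a • v := ha.symm
    have hl0 : l ≠ 0 := by
      rintro rfl
      rw [zero_smul] at hl
      exact hv (h.map_eq_zero_iff.1 hl)
    have huv : u v = v := by
      obtain ⟨k, hk⟩ := hu
      have h3 : ∀ k : ℕ, (((u : V →ₗ[ℝ] V) - 1) ^ k) v = (a - 1) ^ k • v := by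
        intro k
        induction k with
        | zero => simp
        | succ k ih =>
          rw [pow_succ, Module.End.mul_apply]
          have : ((u : V →ₗ[ℝ] V) - 1) v = (a - 1) • v := by
            rw [sub_smul, one_smul, ← ha]; rfl
          rw [this, map_smul, ih, smul_smul, pow_succ, mul_comm]
      have h4 := h3 k
      rw [hk, LinearMap.zero_apply] at h4
      have h5 := (smul_eq_zero.1 h4.symm).resolve_right hv
      have h6 : a = 1 := by linarith [eq_zero_of_pow_eq_zero h5]
      rw [ha, h6, one_smul]
    obtain ⟨t, ht, hlt⟩ := e_recurrent e C hC0 hC v ε hε T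
    refine ⟨t, ht, (l ^ t)⁻¹, inv_ne_zero (pow_ne_zero _ hl0), ?_⟩
    have := gpow g e h u hg' heh' heu' l t 0 v (by simp) hl (by simp) (by simp [huv])
    rw [this, smul_smul, inv_mul_cancel₀ (pow_ne_zero _ hl0)]
    simpa using hlt
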